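/- arXiv:2512.15425 — 2 statements merged into one kernel-verified Lean document; each statement's English description precedes it below -/
import Mathlib

section
/- Let L be a positive integer and c > 0 a real number. Then ∫₀^∞ Q(√(2·c·t)) · t^{L−1} · e^{−t} / (L−1)! dt = 1/2 − (1/2)·√(c/(1+c)) · Σ_{i=0}^{L−1} C(2i, i) / (4(1+c))^i, where C(2i, i) is the central binomial coefficient. -/
/-- The Gaussian tail function `Q(x) = ∫_x^∞ (1/√(2π)) e^{−u²/2} du`. -/
noncomputable def gaussQ (x : ℝ) : ℝ :=
  ∫ u in Set.Ioi x, (1 / Real.sqrt (2 * Real.pi)) * Real.exp (-u ^ 2 / 2)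

open Set Filter Topology MeasureTheory

lemma gaussQ_integrable :
    Integrable (fun u : ℝ => (1 / Real.sqrt (2 * Real.pi)) * Real.exp (-u ^ 2 / 2)) := by
  have h := (integrable_exp_neg_mul_sq (b := 1 / 2) (by norm_num)).const_mul
    (1 / Real.sqrt (2 * Real.pi))
  refine h.congr (Eventually.of_forall fun u => ?_)
  simp only
  congr 2
  ring

lemma gaussQ_zero : gaussQ 0 = 1 / 2 := by
  unfold gaussQ
  rw [integral_const_mul]
  have h := integral_gaussian_Ioi (1 / 2)
  have h2 : ∀ u : ℝ, -u ^ 2 / 2 = -(1 / 2) * u ^ 2 := fun u => by ring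
  simp_rw [h2]
  rw [h]
  have h3 : Real.pi / (1 / 2) = 2 * Real.pi := by ring
  rw [h3]
  have : Real.sqrt (2 * Real.pi) ≠ 0 := by positivity
  field_simp

lemma gaussQ_nonneg (x : ℝ) : 0 ≤ gaussQ x := by
  unfold gaussQ
  exact integral_nonneg fun u => by positivity

lemma gaussQ_eq (x : ℝ) : gaussQ x = 1 / 2 -
    ∫ u in (0 : ℝ)..x, (1 / Real.sqrt (2 * Real.pi)) * Real.exp (-u ^ 2 / 2) := by
  rw [← gaussQ_zero]
  have := intervalIntegral.integral_Ioi_sub_Ioi' (a := 0) (b := x)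
    gaussQ_integrable.integrableOn gaussQ_integrable.integrableOn
  unfold gaussQ
  linarith

lemma gaussQ_hasDerivAt (x : ℝ) :
    HasDerivAt gaussQ (-((1 / Real.sqrt (2 * Real.pi)) * Real.exp (-x ^ 2 / 2))) x := by
  have hc : Continuous (fun u : ℝ => (1 / Real.sqrt (2 * Real.pi)) * Real.exp (-u ^ 2 / 2)) := by
    fun_prop
  have h := (hc.integral_hasStrictDerivAt 0 x).hasDerivAt.const_sub (1 / 2)
  exact h.congr_of_eventuallyEq (Eventually.of_forall gaussQ_eq)

lemma gaussQ_continuous : Continuous gaussQ :=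
  continuous_iff_continuousAt.2 fun x => (gaussQ_hasDerivAt x).continuousAt

lemma gaussQ_le {x : ℝ} (hx : 0 ≤ x) : gaussQ x ≤ 1 / 2 := by
  rw [gaussQ_eq]
  have := intervalIntegral.integral_nonneg (μ := volume)
    (f := fun u => (1 / Real.sqrt (2 * Real.pi)) * Real.exp (-u ^ 2 / 2)) hx
    (fun u _ => by positivity)
  linarith

lemma gaussQ_sqrt_hasDerivAt {c t : ℝ} (hc : 0 < c) (ht : 0 < t) :
    HasDerivAt (fun t => gaussQ (Real.sqrt (2 * c * t)))
      (-(Real.sqrt (c / Real.pi) / 2) * (t ^ (-(1 / 2) : ℝ) * Real.exp (-(c * t)))) t := by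
  have h1 : HasDerivAt (fun t : ℝ => 2 * c * t) (2 * c) t := by
    simpa using (hasDerivAt_id t).const_mul (2 * c)
  have h2 := (gaussQ_hasDerivAt _).comp t (h1.sqrt (by positivity))
  refine h2.congr_deriv ?_
  rw [Real.sq_sqrt (by positivity), Real.rpow_neg ht.le, ← Real.sqrt_eq_rpow]
  have e : -(2 * c * t) / 2 = -(c * t) := by ring
  rw [e, Real.sqrt_mul (by positivity) t, Real.sqrt_mul (by positivity) c,
    Real.sqrt_mul (by positivity) Real.pi, Real.sqrt_div hc.le]
  have hc' : Real.sqrt c ^ 2 = c := Real.sq_sqrt hc.le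
  have h2' : Real.sqrt 2 ^ 2 = 2 := Real.sq_sqrt (by norm_num)
  have : Real.sqrt c ≠ 0 := by positivity
  have : Real.sqrt t ≠ 0 := by positivity
  have : Real.sqrt Real.pi ≠ 0 := by positivity
  have : Real.sqrt 2 ≠ 0 := by positivity
  field_simp
  rw [hc', h2']
  ring

lemma int_pow_exp (n : ℕ) :
    IntegrableOn (fun t : ℝ => t ^ n * Real.exp (-t)) (Ioi 0) := by
  have h := Real.GammaIntegral_convergent (s := n + 1) (by positivity)
  refine h.congr_fun (fun t _ => ?_) measurableSet_Ioi
  simp [mul_comm]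

lemma int_Q_pow_exp (c : ℝ) (n : ℕ) :
    IntegrableOn (fun t : ℝ => gaussQ (Real.sqrt (2 * c * t)) * (t ^ n * Real.exp (-t)))
      (Ioi 0) := by
  refine (int_pow_exp n).bdd_mul (c := 1 / 2) ?_ ?_
  · exact (gaussQ_continuous.comp (by fun_prop)).aestronglyMeasurable
  · refine Eventually.of_forall fun t => ?_
    rw [Real.norm_of_nonneg (gaussQ_nonneg _)]
    exact gaussQ_le (Real.sqrt_nonneg _)

lemma combine {c t : ℝ} (ht : 0 < t) (n : ℕ) (k : ℝ) :
    (-k * (t ^ (-(1 / 2) : ℝ) * Real.exp (-(c * t)))) * (t ^ n * Real.exp (-t))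
     = -k * (t ^ ((n + 1 / 2 : ℝ) - 1) * Real.exp (-((1 + c) * t))) := by
  have h1 : (n + 1 / 2 : ℝ) - 1 = -(1 / 2) + n := by ring
  have h2 : -((1 + c) * t) = -(c * t) + -t := by ring
  rw [h1, h2, Real.rpow_add ht, Real.exp_add, Real.rpow_natCast]
  ring

lemma gamma_int {c : ℝ} (hc : 0 < c) (n : ℕ) :
    IntegrableOn (fun t : ℝ => t ^ ((n + 1 / 2 : ℝ) - 1) * Real.exp (-((1 + c) * t)))
      (Ioi 0) := by
  have h := integrableOn_rpow_mul_exp_neg_mul_rpow (p := 1) (s := (n + 1 / 2 : ℝ) - 1)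
    (b := 1 + c) (by have : (0 : ℝ) ≤ n := by positivity
                     linarith) one_pos (by positivity)
  refine h.congr_fun (fun t _ => ?_) measurableSet_Ioi
  simp only [Real.rpow_one, neg_mul]

lemma by_parts {c : ℝ} (hc : 0 < c) (n : ℕ) :
    ∫ t in Ioi (0 : ℝ), gaussQ (Real.sqrt (2 * c * t)) *
        (n * t ^ (n - 1) * Real.exp (-t) - t ^ n * Real.exp (-t))
      = -(1 / 2 * 0 ^ n) + Real.sqrt (c / Real.pi) / 2 *
        ((1 / (1 + c)) ^ (n + 1 / 2 : ℝ) * Real.Gamma (n + 1 / 2)) := by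
  have key := integral_Ioi_mul_deriv_eq_deriv_mul (a := (0 : ℝ)) (a' := 1 / 2 * 0 ^ n) (b' := 0)
    (u := fun t => gaussQ (Real.sqrt (2 * c * t)))
    (u' := fun t => -(Real.sqrt (c / Real.pi) / 2) * (t ^ (-(1 / 2) : ℝ) * Real.exp (-(c * t))))
    (v := fun t => t ^ n * Real.exp (-t))
    (v' := fun t => n * t ^ (n - 1) * Real.exp (-t) - t ^ n * Real.exp (-t))
    (fun t ht => gaussQ_sqrt_hasDerivAt hc ht) ?_ ?_ ?_ ?_ ?_
  · rw [key, setIntegral_congr_fun measurableSet_Ioi (fun t ht => combine ht n _),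
      integral_const_mul, Real.integral_rpow_mul_exp_neg_mul_Ioi (by positivity) (by positivity)]
    ring
  · intro t _
    have h := (hasDerivAt_pow n t).mul ((hasDerivAt_neg t).exp)
    refine h.congr_deriv ?_
    ring
  · have h := ((int_Q_pow_exp c (n - 1)).const_mul (n : ℝ)).sub (int_Q_pow_exp c n)
    refine IntegrableOn.congr_fun h (fun t _ => ?_) measurableSet_Ioi
    simp only [Pi.mul_apply, Pi.sub_apply]
    ring
  · refine IntegrableOn.congr_fun ((gamma_int hc n).const_mul (-(Real.sqrt (c / Real.pi) / 2)))
      (fun t ht => ?_) measurableSet_Ioi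
    exact (combine ht n _).symm
  · have hcont : Continuous ((fun t => gaussQ (Real.sqrt (2 * c * t))) *
        (fun t : ℝ => t ^ n * Real.exp (-t))) :=
      (gaussQ_continuous.comp (by fun_prop)).mul (by fun_prop)
    have h := hcont.tendsto 0
    simp only [Pi.mul_apply, mul_zero, Real.sqrt_zero, gaussQ_zero, neg_zero, Real.exp_zero,
      mul_one] at h
    exact h.mono_left nhdsWithin_le_nhds
  · have h := (Real.tendsto_pow_mul_exp_neg_atTop_nhds_zero n)
    refine squeeze_zero_norm' ?_ h
    filter_upwards [eventually_ge_atTop 0] with t ht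
    rw [Pi.mul_apply, Real.norm_of_nonneg (mul_nonneg (gaussQ_nonneg _) (by positivity))]
    exact mul_le_of_le_one_left (by positivity)
      ((gaussQ_le (Real.sqrt_nonneg _)).trans (by norm_num))

lemma gamma_half (n : ℕ) : Real.Gamma (n + 1 / 2) =
    Real.sqrt Real.pi * n.centralBinom * n.factorial / 4 ^ n := by
  induction n with
  | zero => rw [Nat.cast_zero, zero_add, Real.Gamma_one_half_eq]; simp
  | succ n ih =>
    have e : ((n + 1 : ℕ) : ℝ) + 1 / 2 = (n + 1 / 2) + 1 := by push_cast; ring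
    rw [e, Real.Gamma_add_one (by positivity), ih, Nat.factorial_succ]
    have h : ((n : ℝ) + 1) * (n + 1).centralBinom = 2 * (2 * n + 1) * n.centralBinom := by
      exact_mod_cast Nat.succ_mul_centralBinom_succ n
    push_cast
    rw [pow_succ]
    field_simp
    linear_combination (-2) * h

lemma rhs_eq {c : ℝ} (hc : 0 < c) (n : ℕ) :
    Real.sqrt (c / Real.pi) / 2 * ((1 / (1 + c)) ^ (n + 1 / 2 : ℝ) * Real.Gamma (n + 1 / 2))
     = n.factorial * (1 / 2 * Real.sqrt (c / (1 + c)) *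
       ((Nat.choose (2 * n) n : ℝ) / (4 * (1 + c)) ^ n)) := by
  rw [gamma_half, Real.rpow_add (by positivity), Real.rpow_natCast, ← Real.sqrt_eq_rpow,
    Real.sqrt_div hc.le, Real.sqrt_div hc.le, Real.sqrt_div zero_le_one, Real.sqrt_one,
    Nat.centralBinom, mul_pow, div_pow, one_pow]
  have : Real.sqrt Real.pi ≠ 0 := by positivity
  have : Real.sqrt (1 + c) ≠ 0 := by positivity
  field_simp

lemma main_aux {c : ℝ} (hc : 0 < c) (n : ℕ) :
    ∫ t in Ioi (0 : ℝ), gaussQ (Real.sqrt (2 * c * t)) * (t ^ n * Real.exp (-t))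
     = n.factorial * (1 / 2 - 1 / 2 * Real.sqrt (c / (1 + c)) *
          ∑ i ∈ Finset.range (n + 1), (Nat.choose (2 * i) i : ℝ) / (4 * (1 + c)) ^ i) := by
  induction n with
  | zero =>
    have h := by_parts hc 0
    rw [rhs_eq hc] at h
    simp only [Nat.cast_zero, zero_mul, zero_sub, mul_neg, integral_neg] at h
    rw [Finset.sum_range_one]
    simp only [Nat.factorial_zero, Nat.cast_one, pow_zero] at h ⊢
    linarith
  | succ n ih =>
    have h := by_parts hc (n + 1)
    rw [rhs_eq hc] at h
    have e : ∀ t : ℝ, gaussQ (Real.sqrt (2 * c * t)) *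
        (((n + 1 : ℕ) : ℝ) * t ^ (n + 1 - 1) * Real.exp (-t) - t ^ (n + 1) * Real.exp (-t))
        = ((n + 1 : ℕ) : ℝ) * (gaussQ (Real.sqrt (2 * c * t)) * (t ^ n * Real.exp (-t)))
          - gaussQ (Real.sqrt (2 * c * t)) * (t ^ (n + 1) * Real.exp (-t)) := by
      intro t
      rw [Nat.add_sub_cancel]
      ring
    simp_rw [e] at h
    rw [integral_sub ((int_Q_pow_exp c n).const_mul _) (int_Q_pow_exp c (n + 1)),
      integral_const_mul, ih] at h
    rw [Finset.sum_range_succ]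
    rw [Nat.factorial_succ] at h ⊢
    rw [pow_succ 0 n] at h
    push_cast at h ⊢
    linear_combination -h

/-- For a positive integer `L` and a real `c > 0`,
`∫₀^∞ Q(√(2ct)) t^{L−1} e^{−t}/(L−1)! dt
  = 1/2 − (1/2)·√(c/(1+c))·Σ_{i=0}^{L−1} C(2i,i)/(4(1+c))^i`. -/
theorem gamma_average_of_Q
    (L : ℕ) (hL : 0 < L) (c : ℝ) (hc : 0 < c) :
    ∫ t in Set.Ioi (0 : ℝ),
        gaussQ (Real.sqrt (2 * c * t)) * t ^ (L - 1) * Real.exp (-t) /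
          (Nat.factorial (L - 1) : ℝ)
      = 1 / 2 - 1 / 2 * Real.sqrt (c / (1 + c)) *
          ∑ i ∈ Finset.range L, (Nat.choose (2 * i) i : ℝ) / (4 * (1 + c)) ^ i := by
  obtain ⟨n, rfl⟩ : ∃ n, L = n + 1 := ⟨L - 1, by omega⟩
  rw [MeasureTheory.integral_div, Nat.add_sub_cancel]
  simp_rw [mul_assoc (gaussQ _)]
  rw [main_aux hc n, mul_div_cancel_left₀ _ (by positivity)]
end

section
/- Let γ_i > 0 and γ_n > 0 be real numbers and k a natural number. For every real x > 0, the function h(x) = x · ((γ_i + γ_n·x²)/(4x³))^k · (x³/(x³ + γ_i + γ_n·x²))^{k + 1/2} is differentiable at x with derivative h′(x) = (1/8) · (x³ + γ_i + γ_n·x²)^{−(k + 3/2)} · ((γ_i + γ_n·x²)/4)^{k − 1} · [ (2 − 2k)·γ_n·x^{13/2} + 3·γ_n²·x^{11/2} + (2 − 6k)·γ_i·x^{9/2} + 8·γ_i·γ_n·x^{7/2} + 5·γ_i²·x^{3/2} ], where the exponent k − 1 is interpreted as an integer power (zpow) of the positive real (γ_i + γ_n·x²)/4. -/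
/-- For `γ_i > 0`, `γ_n > 0`, a natural `k`, and `x > 0`, the function
`h(x) = x·((γ_i + γ_n x²)/(4x³))^k·(x³/(x³ + γ_i + γ_n x²))^{k+1/2}` is differentiable
at `x` with derivative
`h′(x) = (1/8)·(x³ + γ_i + γ_n x²)^{−(k+3/2)}·((γ_i + γ_n x²)/4)^{k−1}·
  [(2−2k)γ_n x^{13/2} + 3γ_n² x^{11/2} + (2−6k)γ_i x^{9/2} + 8γ_iγ_n x^{7/2} + 5γ_i² x^{3/2}]`,
where `k − 1` is an integer power (zpow) of the positive real `(γ_i + γ_n x²)/4`. -/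
theorem deriv_weighted_Psi2_summand
    (γi γn : ℝ) (hγi : 0 < γi) (hγn : 0 < γn) (k : ℕ) (x : ℝ) (hx : 0 < x) :
    HasDerivAt
      (fun y : ℝ => y * ((γi + γn * y ^ 2) / (4 * y ^ 3)) ^ k *
        (y ^ 3 / (y ^ 3 + γi + γn * y ^ 2)) ^ ((k : ℝ) + 1 / 2))
      (1 / 8 * (x ^ 3 + γi + γn * x ^ 2) ^ (-((k : ℝ) + 3 / 2)) *
        ((γi + γn * x ^ 2) / 4) ^ ((k : ℤ) - 1) *
        ((2 - 2 * (k : ℝ)) * γn * x ^ ((13 : ℝ) / 2) +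
          3 * γn ^ 2 * x ^ ((11 : ℝ) / 2) +
          (2 - 6 * (k : ℝ)) * γi * x ^ ((9 : ℝ) / 2) +
          8 * γi * γn * x ^ ((7 : ℝ) / 2) +
          5 * γi ^ 2 * x ^ ((3 : ℝ) / 2))) x := by
  have key : ∀ y : ℝ, 0 < y →
      y * ((γi + γn * y ^ 2) / (4 * y ^ 3)) ^ k *
        (y ^ 3 / (y ^ 3 + γi + γn * y ^ 2)) ^ ((k : ℝ) + 1 / 2) =
      y ^ ((5 : ℝ) / 2) * ((γi + γn * y ^ 2) / 4) ^ k *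
        (y ^ 3 + γi + γn * y ^ 2) ^ (-((k : ℝ) + 1 / 2)) := by
    intro y hy
    have hS : 0 < y ^ 3 + γi + γn * y ^ 2 := by positivity
    rw [Real.div_rpow (by positivity) hS.le, Real.rpow_neg hS.le]
    have h1 : (y ^ 3) ^ ((k : ℝ) + 1 / 2) = (y ^ 3) ^ k * y ^ ((3 : ℝ) / 2) := by
      rw [Real.rpow_add (by positivity), Real.rpow_natCast]
      congr 1
      rw [← Real.rpow_natCast y 3, ← Real.rpow_mul hy.le]
      norm_num
    have h2 : y ^ ((5 : ℝ) / 2) = y * y ^ ((3 : ℝ) / 2) := by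
      rw [show (5 : ℝ) / 2 = 1 + 3 / 2 by norm_num, Real.rpow_add hy, Real.rpow_one]
    rw [h1, h2, ← div_div, div_pow _ (y ^ 3)]
    have h3 : (y ^ 3) ^ k ≠ 0 := by positivity
    have h4 : (y ^ 3 + γi + γn * y ^ 2) ^ ((k : ℝ) + 1 / 2) ≠ 0 := by positivity
    field_simp
  have hS : 0 < x ^ 3 + γi + γn * x ^ 2 := by positivity
  have hA : 0 < (γi + γn * x ^ 2) / 4 := by positivity
  have hdA : HasDerivAt (fun y : ℝ => (γi + γn * y ^ 2) / 4) (γn * x / 2) x := by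
    have := ((((hasDerivAt_id x).pow 2).const_mul γn).const_add γi).div_const 4
    refine this.congr_deriv ?_
    simp
    ring
  have hdS : HasDerivAt (fun y : ℝ => y ^ 3 + γi + γn * y ^ 2)
      (3 * x ^ 2 + 2 * γn * x) x := by
    have := (((hasDerivAt_id x).pow 3).add_const γi).add
      (((hasDerivAt_id x).pow 2).const_mul γn)
    refine this.congr_deriv ?_
    simp
    ring
  have hd1 := Real.hasDerivAt_rpow_const (x := x) (p := (5 : ℝ) / 2) (Or.inl hx.ne')
  have hd := (hd1.mul (hdA.pow k)).mul
    (hdS.rpow_const (p := -((k : ℝ) + 1 / 2)) (Or.inl hS.ne'))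
  have hev := hd.congr_of_eventuallyEq
    (Filter.eventuallyEq_of_mem (Ioi_mem_nhds hx) (fun y hy => key y hy))
  refine hev.congr_deriv ?_
  have hk : (k : ℝ) * ((γi + γn * x ^ 2) / 4) ^ (k - 1) =
      k * ((γi + γn * x ^ 2) / 4) ^ ((k : ℤ) - 1) := by
    rcases k with _ | k
    · simp
    · simp
  have hk2 : ((γi + γn * x ^ 2) / 4) ^ k =
      ((γi + γn * x ^ 2) / 4) ^ ((k : ℤ) - 1) * ((γi + γn * x ^ 2) / 4) := by
    rw [← zpow_add_one₀ hA.ne', sub_add_cancel, zpow_natCast]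
  have e1 : (x ^ 3 + γi + γn * x ^ 2) ^ (-((k : ℝ) + 1 / 2)) =
      (x ^ 3 + γi + γn * x ^ 2) ^ (-((k : ℝ) + 3 / 2)) * (x ^ 3 + γi + γn * x ^ 2) := by
    rw [← Real.rpow_add_one hS.ne']
    congr 1
    ring
  have e2 : -((k : ℝ) + 1 / 2) - 1 = -((k : ℝ) + 3 / 2) := by ring
  have ex : ∀ n : ℕ, x ^ ((3 : ℝ) / 2 + n) = x ^ ((3 : ℝ) / 2) * x ^ n := fun n => by
    rw [Real.rpow_add hx, Real.rpow_natCast]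
  have x13 := ex 5
  have x11 := ex 4
  have x9 := ex 3
  have x7 := ex 2
  have x5 := ex 1
  norm_num at x13 x11 x9 x7 x5
  have x3 : (5 : ℝ) / 2 - 1 = 3 / 2 := by norm_num
  simp only [Pi.mul_apply, Pi.pow_apply]
  rw [hk, hk2, e2, e1, x3, x13, x11, x9, x7, x5]
  ring
end
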